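/- Let p and q = (p+1)/2 both be primes with p ≡ 5 (mod 8). Then C_su(p) = C_t(q); that is, the number of self-complementary undirected circulant graphs of order p equals the number of circulant tournaments of order q. -/

import Mathlib

open Finset

/-- Number of self-complementary undirected circulant graphs of odd prime order `p`:
`C_su(p) = (2/(p-1))·∑_{r | (p-1)/2, r even} φ(r)·2^{(p-1)/(2r)}`. -/
def Csu (p : ℕ) : ℚ :=
  (2 / ((p : ℚ) - 1)) *
    ∑ r ∈ ((p - 1) / 2).divisors.filter (fun r => Even r),
      (Nat.totient r : ℚ) * (2 : ℚ) ^ ((p - 1) / (2 * r))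

/-- Number of circulant tournaments of odd prime order `q`:
`C_t(q) = (1/(q-1))·∑_{r | q-1, r odd} φ(r)·2^{(q-1)/(2r)}`. -/
def Ct (q : ℕ) : ℚ :=
  (1 / ((q : ℚ) - 1)) *
    ∑ r ∈ (q - 1).divisors.filter (fun r => Odd r),
      (Nat.totient r : ℚ) * (2 : ℚ) ^ ((q - 1) / (2 * r))

/-!
Write `p = 4m + 1` and `q = 2m + 1`, where `m` is odd. The even divisors of `2m` are the numbers
`2r` with `r ∣ m`, and its odd divisors are the divisors `r` of `m`. Since such an `r` is odd,
`φ(2r) = φ(r)`, so the two sums agree term by term.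
-/

theorem filter_dvd_divisors_mul {d : ℕ} (hd : d ≠ 0) (m : ℕ) :
    {r ∈ (d * m).divisors | d ∣ r} = m.divisors.image (d * ·) := by
  ext r
  simp only [mem_filter, mem_image, Nat.mem_divisors]
  constructor
  · rintro ⟨⟨hdvd, hne⟩, s, rfl⟩
    exact ⟨s, ⟨Nat.dvd_of_mul_dvd_mul_left (Nat.pos_of_ne_zero hd) hdvd,
      right_ne_zero_of_mul hne⟩, rfl⟩
  · rintro ⟨s, ⟨hdvd, hne⟩, rfl⟩
    exact ⟨⟨mul_dvd_mul_left d hdvd, mul_ne_zero hd hne⟩, dvd_mul_right d s⟩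

theorem filter_coprime_divisors_mul {d : ℕ} (hd : d ≠ 0) (m : ℕ) :
    {r ∈ (d * m).divisors | r.Coprime d} = {r ∈ m.divisors | r.Coprime d} := by
  ext r
  simp only [mem_filter, Nat.mem_divisors, mul_ne_zero_iff_left hd]
  exact and_congr_left fun hr => and_congr_left fun _ => hr.dvd_mul_left

theorem Csu_four_mul_add_one (m : ℕ) :
    Csu (4 * m + 1) =
      1 / (2 * (m : ℚ)) * ∑ r ∈ m.divisors, (Nat.totient (2 * r) : ℚ) * 2 ^ (m / r) := by
  have half_pred : (4 * m + 1 - 1) / 2 = 2 * m := by omega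
  have exponent (r : ℕ) : (4 * m + 1 - 1) / (2 * (2 * r)) = m / r := by
    rw [Nat.add_sub_cancel, ← mul_assoc]
    exact Nat.mul_div_mul_left m r four_pos
  have prefactor : (2 : ℚ) / (((4 * m + 1 : ℕ) : ℚ) - 1) = 1 / (2 * m) := by
    push_cast
    rw [add_sub_cancel_right, show (4 * m : ℚ) = 2 * (2 * m) by ring,
      ← div_div, div_self two_ne_zero]
  simp only [Csu, half_pred, prefactor, even_iff_two_dvd]
  rw [filter_dvd_divisors_mul two_ne_zero, sum_image (mul_right_injective₀ two_ne_zero).injOn]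
  simp only [exponent]

theorem Ct_two_mul_add_one (m : ℕ) :
    Ct (2 * m + 1) =
      1 / (2 * (m : ℚ)) * ∑ r ∈ m.divisors with Odd r, (Nat.totient r : ℚ) * 2 ^ (m / r) := by
  have prefactor : ((2 * m + 1 : ℕ) : ℚ) - 1 = 2 * m := by push_cast; ring
  simp only [Ct, prefactor, Nat.add_sub_cancel, ← Nat.coprime_two_right,
    filter_coprime_divisors_mul two_ne_zero, Nat.mul_div_mul_left _ _ two_pos]

theorem Csu_eq_Ct_general (p q : ℕ) (hpq : p + 1 = 2 * q) (hmod : p % 8 = 5) :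
    Csu p = Ct q := by
  obtain ⟨k, rfl⟩ : ∃ k, p = 4 * (2 * k + 1) + 1 := ⟨p / 8, by omega⟩
  obtain rfl : q = 2 * (2 * k + 1) + 1 := by omega
  have odd_of_mem {r : ℕ} (hr : r ∈ (2 * k + 1).divisors) : Odd r :=
    (odd_two_mul_add_one k).of_dvd_nat (Nat.dvd_of_mem_divisors hr)
  rw [Csu_four_mul_add_one, Ct_two_mul_add_one, filter_true_of_mem fun _ => odd_of_mem]
  congr 1
  exact sum_congr rfl fun r hr => by rw [Nat.totient_two_mul_of_odd (odd_of_mem hr)]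

/-- If `p` and `q = (p+1)/2` are both prime and `p ≡ 5 (mod 8)`,
then `C_su(p) = C_t(q)`. -/
theorem Csu_eq_Ct (p q : ℕ) (hp : p.Prime) (hq : q.Prime)
    (hpq : p + 1 = 2 * q) (hmod : p % 8 = 5) :
    Csu p = Ct q :=
  Csu_eq_Ct_general p q hpq hmod
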